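/- arXiv:1110.6930 — 2 statements merged into one kernel-verified Lean document; each statement's English description precedes it below -/
import Mathlib

section
/- Let J ⊆ A be an ideal and let M, N be m×m matrices over A such that every entry of N·M − 1 lies in J (1 the identity matrix). Then Σ_{u,v=1}^m N_{u,v} • d(M_{v,u}) − det(N) • d(det M) lies in J·Ω_{A|k}. -/
/-!
Modulo `J` the matrix `N` is a left inverse of `M`, hence by Cramer's rule it is congruent to
`det N • adjugate M`. Replacing `N` by this matrix turns the sum into `det N` times the right-hand
side of Jacobi's formula `d (det M) = ∑ u, ∑ v, (adjugate M)_{u,v} • d (M_{v,u})`.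
-/

open Equiv Finset

theorem derivation_prod {R A Ω ι : Type*} [CommSemiring R] [CommSemiring A] [Algebra R A]
    [AddCommMonoid Ω] [Module A Ω] [Module R Ω] [DecidableEq ι]
    (D : Derivation R A Ω) (s : Finset ι) (f : ι → A) :
    D (∏ i ∈ s, f i) = ∑ i ∈ s, (∏ j ∈ s.erase i, f j) • D (f i) := by
  induction s using Finset.induction_on with
  | empty => simp
  | insert a s ha ih =>
    have erase_prod (i : ι) (hi : i ∈ s) :
        ∏ j ∈ (insert a s).erase i, f j = f a * ∏ j ∈ s.erase i, f j := by
      rw [erase_insert_of_ne (ne_of_mem_of_not_mem hi ha).symm,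
        prod_insert (notMem_mono (erase_subset i s) ha)]
    calc D (∏ i ∈ insert a s, f i)
        = (∏ i ∈ s, f i) • D (f a) + ∑ i ∈ s, f a • (∏ j ∈ s.erase i, f j) • D (f i) := by
          rw [prod_insert ha, D.leibniz, ih, smul_sum, add_comm]
      _ = ∑ i ∈ insert a s, (∏ j ∈ (insert a s).erase i, f j) • D (f i) := by
          rw [sum_insert ha, erase_insert ha]
          congr 1
          exact sum_congr rfl fun i hi ↦ by rw [erase_prod i hi, mul_smul]

section

variable {A n : Type*} [CommRing A] [Fintype n] [DecidableEq n]

theorem adjugate_apply_eq_sum_perm (M : Matrix n n A) (i j : n) :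
    M.adjugate i j = ∑ σ : Perm n with σ i = j, Perm.sign σ • ∏ l ∈ univ.erase i, M (σ l) l := by
  have adjugate_eq_det : M.adjugate i j = (M.updateCol i (Pi.single j 1)).det := by
    rw [← Matrix.cramer_apply, Matrix.cramer_eq_adjugate_mulVec, Matrix.mulVec_single_one,
      Matrix.col_apply]
  rw [adjugate_eq_det, Matrix.det_apply, sum_filter]
  refine sum_congr rfl fun σ _ ↦ ?_
  have prod_off_col : ∏ l ∈ univ.erase i, M.updateCol i (Pi.single j 1) (σ l) l
      = ∏ l ∈ univ.erase i, M (σ l) l :=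
    prod_congr rfl fun l hl ↦ by rw [Matrix.updateCol_ne (ne_of_mem_erase hl)]
  rw [← mul_prod_erase univ _ (mem_univ i), prod_off_col, Matrix.updateCol_self, Pi.single_apply,
    ite_mul, one_mul, zero_mul, smul_ite, smul_zero]

theorem sum_adjugate_smul_eq_sum_perm {Ω : Type*} [AddCommGroup Ω] [Module A Ω]
    (M : Matrix n n A) (x : n → Ω) (i : n) :
    ∑ j, M.adjugate i j • x j =
      ∑ σ : Perm n, Perm.sign σ • (∏ l ∈ univ.erase i, M (σ l) l) • x (σ i) := by
  rw [← sum_fiberwise univ (fun σ : Perm n ↦ σ i)]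
  refine sum_congr rfl fun j _ ↦ ?_
  rw [adjugate_apply_eq_sum_perm, sum_smul]
  refine sum_congr rfl fun σ hσ ↦ ?_
  rw [(mem_filter.mp hσ).2, smul_assoc]

theorem derivation_det {R Ω : Type*} [CommSemiring R] [Algebra R A]
    [AddCommGroup Ω] [Module A Ω] [Module R Ω] (D : Derivation R A Ω) (M : Matrix n n A) :
    D M.det = ∑ i, ∑ j, M.adjugate i j • D (M j i) := by
  calc D M.det
      = ∑ σ : Perm n, Perm.sign σ • D (∏ i, M (σ i) i) := by
        simp only [Matrix.det_apply, map_sum, Units.smul_def, map_zsmul]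
    _ = ∑ σ : Perm n, ∑ i, Perm.sign σ • (∏ l ∈ univ.erase i, M (σ l) l) • D (M (σ i) i) := by
        simp only [derivation_prod, smul_sum]
    _ = ∑ i, ∑ j, M.adjugate i j • D (M j i) := by
        rw [sum_comm]
        simp only [sum_adjugate_smul_eq_sum_perm]

theorem eq_det_smul_adjugate_of_mul_eq_one {M N : Matrix n n A} (h : N * M = 1) :
    N = N.det • M.adjugate := by
  have det_mul_det : N.det * M.det = 1 := by rw [← Matrix.det_mul, h, Matrix.det_one]
  calc N = (N.det * M.det) • N := by rw [det_mul_det, one_smul]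
    _ = N.det • (N * (M * M.adjugate)) := by
        rw [Matrix.mul_adjugate, Matrix.mul_smul, mul_one, mul_smul]
    _ = N.det • M.adjugate := by rw [← mul_assoc, h, one_mul]

theorem sub_det_mul_adjugate_mem {J : Ideal A} {M N : Matrix n n A}
    (h : ∀ i j, (N * M - 1) i j ∈ J) (i j : n) : N i j - N.det * M.adjugate i j ∈ J := by
  let q := Ideal.Quotient.mk J
  have map_mul_eq_one : q.mapMatrix N * q.mapMatrix M = 1 := by
    rw [← map_mul, ← map_one q.mapMatrix]
    exact Matrix.ext fun i j ↦ Ideal.Quotient.eq.mpr (h i j)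
  have map_eq := eq_det_smul_adjugate_of_mul_eq_one map_mul_eq_one
  rw [← RingHom.map_det, ← RingHom.map_adjugate] at map_eq
  rw [← Ideal.Quotient.eq, map_mul]
  exact congr_fun₂ map_eq i j

theorem statement2_general {R Ω : Type*} [CommSemiring R] [Algebra R A]
    [AddCommGroup Ω] [Module A Ω] [Module R Ω] (D : Derivation R A Ω)
    (J : Ideal A) (M N : Matrix n n A) (h : ∀ i j, (N * M - 1) i j ∈ J) :
    (∑ i, ∑ j, N i j • D (M j i)) - N.det • D M.det ∈ J • (⊤ : Submodule A Ω) := by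
  have eq_sum : (∑ i, ∑ j, N i j • D (M j i)) - N.det • D M.det
      = ∑ i, ∑ j, (N i j - N.det * M.adjugate i j) • D (M j i) := by
    simp only [derivation_det, smul_sum, sub_smul, mul_smul, sum_sub_distrib]
  rw [eq_sum]
  exact sum_mem fun i _ ↦ sum_mem fun j _ ↦
    Submodule.smul_mem_smul (sub_det_mul_adjugate_mem h i j) Submodule.mem_top

end

/-- Let `J ⊆ A` be an ideal and `M, N` be `m × m` matrices over `A` such that every entry of
`N * M - 1` lies in `J`.  Then `∑_{u,v} N_{u,v} • d (M_{v,u}) - det N • d (det M)` lies in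
`J · Ω_{A|k}`. -/
theorem statement2 {k A : Type*} [CommRing k] [CommRing A] [Algebra k A]
    (J : Ideal A) {m : ℕ} (M N : Matrix (Fin m) (Fin m) A)
    (h : ∀ u v : Fin m, (N * M - 1) u v ∈ J) :
    (∑ u : Fin m, ∑ v : Fin m, N u v • (KaehlerDifferential.D k A) (M v u)) -
        N.det • (KaehlerDifferential.D k A) M.det ∈
      J • (⊤ : Submodule A (KaehlerDifferential k A)) :=
  statement2_general (KaehlerDifferential.D k A) J M N h
end

section
/- Let J ⊆ A be an ideal. Let M_{12}, M_{21} be m×m matrices, M'_{12}, M'_{21} be m'×m' matrices, and D_1, D_2 be m'×m matrices over A, and assume that every entry of M_{12}·M_{21} − 1, of M'_{12}·M'_{21} − 1, of M'_{12}·D_2 − D_1·M_{12}, and of M'_{21}·D_1 − D_2·M_{21} lies in J. Then every entry of the Ω_{A|k}-valued matrix D_1·M_{12}·d(M_{21}) + M'_{12}·d(M'_{21}·D_1 − D_2·M_{21}) + M'_{12}·d(D_2)·M_{21} − d(D_1) − M'_{12}·d(M'_{21})·D_1 lies in J·Ω_{A|k}. -/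
/-- Entrywise application of the universal derivation `d : A → Ω_{A|k}` to a matrix. -/
noncomputable def matD (k : Type*) {A : Type*} [CommRing k] [CommRing A] [Algebra k A]
    {m n : ℕ} (M : Matrix (Fin m) (Fin n) A) :
    Matrix (Fin m) (Fin n) (KaehlerDifferential k A) :=
  M.map (KaehlerDifferential.D k A)

/-- Product of a matrix over `A` with a matrix over an `A`-module `V`, using the scalar
action of `A` on `V`. -/
def matLMul {A V : Type*} [CommRing A] [AddCommMonoid V] [Module A V]
    {m n p : ℕ} (M : Matrix (Fin m) (Fin n) A) (W : Matrix (Fin n) (Fin p) V) :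
    Matrix (Fin m) (Fin p) V :=
  fun u v => ∑ x : Fin n, M u x • W x v

/-- Product of a matrix over an `A`-module `V` with a matrix over `A`, using the scalar
action of `A` on `V`. -/
def matRMul {A V : Type*} [CommRing A] [AddCommMonoid V] [Module A V]
    {m n p : ℕ} (W : Matrix (Fin m) (Fin n) V) (M : Matrix (Fin n) (Fin p) A) :
    Matrix (Fin m) (Fin p) V :=
  fun u v => ∑ x : Fin n, M x v • W u x

/-! The Leibniz rule, together with the associativity of the two actions of matrices over `A` on
matrices over an `A`-module, cancels every term of the matrix in question except
`(M'₁₂·M'₂₁ - 1)·d(D₁) - (M'₁₂·D₂ - D₁·M₁₂)·d(M₂₁)`, whose coefficient matrices have their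
entries in `J`. -/

section MatrixAction

variable {A V : Type*} [CommRing A] {m n p q : ℕ}

section AddCommMonoid

variable [AddCommMonoid V] [Module A V]

theorem matLMul_matLMul (M : Matrix (Fin m) (Fin n) A) (N : Matrix (Fin n) (Fin p) A)
    (W : Matrix (Fin p) (Fin q) V) : matLMul M (matLMul N W) = matLMul (M * N) W := by
  ext u v
  simp only [matLMul, Matrix.mul_apply, Finset.smul_sum, Finset.sum_smul, smul_smul]
  exact Finset.sum_comm

theorem matLMul_matRMul (M : Matrix (Fin m) (Fin n) A) (W : Matrix (Fin n) (Fin p) V)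
    (N : Matrix (Fin p) (Fin q) A) : matLMul M (matRMul W N) = matRMul (matLMul M W) N := by
  ext u v
  simp only [matLMul, matRMul, Finset.smul_sum, smul_comm (M _ _)]
  exact Finset.sum_comm

theorem matLMul_add (M : Matrix (Fin m) (Fin n) A) (W X : Matrix (Fin n) (Fin p) V) :
    matLMul M (W + X) = matLMul M W + matLMul M X := by
  ext u v
  simp only [matLMul, Matrix.add_apply, smul_add, Finset.sum_add_distrib]

theorem one_matLMul (W : Matrix (Fin n) (Fin p) V) :
    matLMul (1 : Matrix (Fin n) (Fin n) A) W = W := by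
  ext u v
  simp [matLMul, Matrix.one_apply]

theorem matLMul_apply_mem_smul {J : Ideal A} {N : Submodule A V} {M : Matrix (Fin m) (Fin n) A}
    {W : Matrix (Fin n) (Fin p) V} (hM : ∀ u v, M u v ∈ J) (hW : ∀ u v, W u v ∈ N)
    (u : Fin m) (v : Fin p) : matLMul M W u v ∈ J • N :=
  sum_mem fun x _ => Submodule.smul_mem_smul (hM u x) (hW x v)

theorem map_derivation_mul {k : Type*} [CommSemiring k] [Algebra k A] [Module k V]
    (d : Derivation k A V) (M : Matrix (Fin m) (Fin n) A) (N : Matrix (Fin n) (Fin p) A) :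
    (M * N).map d = matLMul M (N.map d) + matRMul (M.map d) N := by
  ext u v
  simp only [matLMul, matRMul, Matrix.map_apply, Matrix.add_apply, Matrix.mul_apply, map_sum,
    Derivation.leibniz, Finset.sum_add_distrib]

end AddCommMonoid

section AddCommGroup

variable [AddCommGroup V] [Module A V]

theorem matLMul_sub (M : Matrix (Fin m) (Fin n) A) (W X : Matrix (Fin n) (Fin p) V) :
    matLMul M (W - X) = matLMul M W - matLMul M X := by
  ext u v
  simp only [matLMul, Matrix.sub_apply, smul_sub, Finset.sum_sub_distrib]

theorem sub_matLMul (M N : Matrix (Fin m) (Fin n) A) (W : Matrix (Fin n) (Fin p) V) :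
    matLMul (M - N) W = matLMul M W - matLMul N W := by
  ext u v
  simp only [matLMul, Matrix.sub_apply, sub_smul, Finset.sum_sub_distrib]

end AddCommGroup

end MatrixAction

section MixedCocycle

variable {k A V : Type*} [CommSemiring k] [CommRing A] [Algebra k A] [AddCommGroup V] [Module A V]
  [Module k V] {m n m' n' : ℕ}

theorem mixed_cocycle_eq (d : Derivation k A V)
    (M12 : Matrix (Fin m) (Fin n) A) (M21 : Matrix (Fin n) (Fin m) A)
    (M'12 : Matrix (Fin m') (Fin n') A) (M'21 : Matrix (Fin n') (Fin m') A)
    (D1 : Matrix (Fin m') (Fin m) A) (D2 : Matrix (Fin n') (Fin n) A) :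
    matLMul (D1 * M12) (M21.map d) + matLMul M'12 ((M'21 * D1 - D2 * M21).map d) +
        matRMul (matLMul M'12 (D2.map d)) M21 - D1.map d -
        matRMul (matLMul M'12 (M'21.map d)) D1 =
      matLMul (M'12 * M'21 - 1) (D1.map d) - matLMul (M'12 * D2 - D1 * M12) (M21.map d) := by
  have leibniz : matLMul M'12 ((M'21 * D1 - D2 * M21).map d) =
      matLMul (M'12 * M'21) (D1.map d) + matRMul (matLMul M'12 (M'21.map d)) D1 -
        (matLMul (M'12 * D2) (M21.map d) + matRMul (matLMul M'12 (D2.map d)) M21) := by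
    rw [Matrix.map_sub d (map_sub d), map_derivation_mul, map_derivation_mul]
    simp only [matLMul_sub, matLMul_add, matLMul_matLMul, matLMul_matRMul]
  rw [leibniz, sub_matLMul, sub_matLMul, one_matLMul]
  abel

theorem statement13_general (d : Derivation k A V) (J : Ideal A)
    (M12 : Matrix (Fin m) (Fin n) A) (M21 : Matrix (Fin n) (Fin m) A)
    (M'12 : Matrix (Fin m') (Fin n') A) (M'21 : Matrix (Fin n') (Fin m') A)
    (D1 : Matrix (Fin m') (Fin m) A) (D2 : Matrix (Fin n') (Fin n) A)
    (hM' : ∀ u v, (M'12 * M'21 - 1 : Matrix (Fin m') (Fin m') A) u v ∈ J)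
    (hD : ∀ u v, (M'12 * D2 - D1 * M12) u v ∈ J)
    (u : Fin m') (v : Fin m) :
    (matLMul (D1 * M12) (M21.map d) + matLMul M'12 ((M'21 * D1 - D2 * M21).map d) +
        matRMul (matLMul M'12 (D2.map d)) M21 - D1.map d -
        matRMul (matLMul M'12 (M'21.map d)) D1) u v ∈ J • (⊤ : Submodule A V) := by
  rw [mixed_cocycle_eq]
  exact sub_mem (matLMul_apply_mem_smul hM' (fun _ _ => Submodule.mem_top) u v)
    (matLMul_apply_mem_smul hD (fun _ _ => Submodule.mem_top) u v)

end MixedCocycle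

/-- Let `J ⊆ A` be an ideal, `M₁₂, M₂₁` be `m × m` matrices, `M'₁₂, M'₂₁` be `m' × m'`
matrices and `D₁, D₂` be `m' × m` matrices over `A`, such that every entry of
`M₁₂·M₂₁ - 1`, of `M'₁₂·M'₂₁ - 1`, of `M'₁₂·D₂ - D₁·M₁₂` and of `M'₂₁·D₁ - D₂·M₂₁` lies
in `J`.  Then every entry of the `Ω_{A|k}`-valued matrix
`D₁·M₁₂·d(M₂₁) + M'₁₂·d(M'₂₁·D₁ - D₂·M₂₁) + M'₁₂·d(D₂)·M₂₁ - d(D₁) - M'₁₂·d(M'₂₁)·D₁`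
lies in `J · Ω_{A|k}`. -/
theorem statement13 {k A : Type*} [CommRing k] [CommRing A] [Algebra k A]
    (J : Ideal A) {m m' : ℕ}
    (M12 M21 : Matrix (Fin m) (Fin m) A)
    (M'12 M'21 : Matrix (Fin m') (Fin m') A)
    (D1 D2 : Matrix (Fin m') (Fin m) A)
    (hM : ∀ u v : Fin m, (M12 * M21 - 1) u v ∈ J)
    (hM' : ∀ u v : Fin m', (M'12 * M'21 - 1) u v ∈ J)
    (hD1 : ∀ u : Fin m', ∀ v : Fin m, (M'12 * D2 - D1 * M12) u v ∈ J)
    (hD2 : ∀ u : Fin m', ∀ v : Fin m, (M'21 * D1 - D2 * M21) u v ∈ J) :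
    ∀ u : Fin m', ∀ v : Fin m,
      (matLMul (D1 * M12) (matD k M21) +
        matLMul M'12 (matD k (M'21 * D1 - D2 * M21)) +
        matRMul (matLMul M'12 (matD k D2)) M21 -
        matD k D1 -
        matRMul (matLMul M'12 (matD k M'21)) D1) u v ∈
      J • (⊤ : Submodule A (KaehlerDifferential k A)) :=
  statement13_general (KaehlerDifferential.D k A) J M12 M21 M'12 M'21 D1 D2 hM' hD1
end
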